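/- If X_s = Y_s − cs where Y is a pure-jump non-decreasing cyclically interchangeable process with Y_0 = 0, c > 0, and X_t = −x < 0 almost surely, then P(T_x = t) = x/(ct). -/

import Mathlib

/-!
Continue a path `g` of the process from `[0, t]` to `[0, 2t]` by attaching a second copy of itself.
Its running infimum `J` is Lipschitz, because `s ↦ g s + c * s` is non-decreasing. Where `J = g`,
the slope of `J` is that of `g`, almost everywhere `-c` since a non-decreasing pure-jump function
has derivative zero almost everywhere; elsewhere `J` has slope zero almost everywhere. As `J`
decreases by `x` over `[t, 2t]`, it coincides with `g` there on a set of measure `x / c`. Finally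
`J = g` at time `u + t` exactly when the path shifted by `u` stays at or above `-x` before time `t`.
So for every path the shifts with this property have measure `x / c`. By cyclic exchangeability each
shift has it with the same probability, and Fubini gives `x / (c * t)`.

For almost every `u`, staying at or above `-x` is the same as staying strictly above it, locally
uniformly on `[0, t)`; the event of not hitting `-x` before `t` lies between these two.
-/

open Set MeasureTheory
open scoped ENNReal

/-- The cyclic path shift `θ_u` over the interval `[0, t]`. -/
noncomputable def theta (t u : ℝ) (ω : ℝ → ℝ) : ℝ → ℝ :=
  fun s => if s < t - u then ω 0 + ω (s + u) - ω u else ω (s - (t - u)) + ω t - ω u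

/-- A function is pure jump on `[0,t]` if it is the sum of its jumps:
`f s = f 0 + ∑_{0 < u ≤ s} (f u − f(u−))`. -/
def PureJumpOn (f : ℝ → ℝ) (t : ℝ) : Prop :=
  ∀ s ∈ Icc (0:ℝ) t, f s = f 0 + ∑' u : (Ioc (0:ℝ) s), (f u - Function.leftLim f u)

open Filter Topology

section SingularPath

theorem mutuallySingular_of_univ_le_tsum_singleton {α : Type*} [MeasurableSpace α]
    [MeasurableSingletonClass α] {μ ν : Measure α} [IsFiniteMeasure μ] [NullSingletonClass ν]
    (h : μ univ ≤ ∑' a, μ {a}) : μ ⟂ₘ ν := by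
  have hsum : ∑' a, μ {a} ≠ ∞ := by
    refine ((tsum_meas_le_meas_iUnion_of_disjoint μ (fun a => measurableSet_singleton a)
      fun a b hab => ?_).trans_lt (measure_lt_top μ _)).ne
    simpa [Function.onFun] using hab
  set D : Set α := Function.support fun a => μ {a}
  have hD : D.Countable := Summable.countable_support_ennreal hsum
  have hμD : μ univ ≤ μ D := by
    rw [← tsum_subtype_support] at h
    simpa using h.trans_eq (tsum_measure_preimage_singleton (f := id) hD
      fun a _ => measurableSet_singleton a)
  refine ⟨Dᶜ, hD.measurableSet.compl, ?_, ?_⟩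
  · rw [measure_compl hD.measurableSet (measure_ne_top μ D), tsub_eq_zero_of_le hμD]
  · rw [compl_compl, hD.measure_zero]

/-- The function equal to `f` on `[a, b]` and constant on either side of it; its measure carries
the increments of `f` on `(a, b]`. -/
noncomputable def stieltjesOfMonotoneOn {f : ℝ → ℝ} {a b : ℝ} (hab : a < b)
    (hf : MonotoneOn f (Icc a b)) (hrc : ∀ s ∈ Ico a b, ContinuousWithinAt f (Ici s) s) :
    StieltjesFunction ℝ where
  toFun := IccExtend hab.le fun s : Icc a b => f s
  mono' := Monotone.IccExtend hab.le fun r s hrs => hf r.2 s.2 hrs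
  right_continuous' s := by
    rcases lt_or_ge s b with hs | hs
    · have hlt : (projIcc a b hab.le s : ℝ) < b := max_lt hab (min_lt_of_right_lt hs)
      refine (hrc _ ⟨(projIcc a b hab.le s).2.1, hlt⟩).comp
        (f := fun r => (projIcc a b hab.le r : ℝ)) (by fun_prop)
        fun r hr => monotone_projIcc hab.le hr
    · exact continuousWithinAt_const.congr
        (fun r hr => IccExtend_of_right_le hab.le _ (hs.trans hr))
        (IccExtend_of_right_le hab.le _ hs)

theorem stieltjesOfMonotoneOn_eqOn {f : ℝ → ℝ} {a b : ℝ} (hab : a < b)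
    (hf : MonotoneOn f (Icc a b)) (hrc : ∀ s ∈ Ico a b, ContinuousWithinAt f (Ici s) s) :
    EqOn (stieltjesOfMonotoneOn hab hf hrc) f (Icc a b) :=
  fun _ hs => IccExtend_of_mem hab.le (fun s : Icc a b => f s) hs

theorem measure_univ_stieltjesOfMonotoneOn {f : ℝ → ℝ} {a b : ℝ} (hab : a < b)
    (hf : MonotoneOn f (Icc a b)) (hrc : ∀ s ∈ Ico a b, ContinuousWithinAt f (Ici s) s) :
    (stieltjesOfMonotoneOn hab hf hrc).measure univ = ENNReal.ofReal (f b - f a) := by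
  refine StieltjesFunction.measure_univ _ ?_ ?_
  · refine tendsto_const_nhds.congr' ?_
    filter_upwards [Iic_mem_atBot a] with s hs
    exact (IccExtend_of_le_left hab.le (fun s : Icc a b => f s) hs).symm
  · refine tendsto_const_nhds.congr' ?_
    filter_upwards [Ici_mem_atTop b] with s hs
    exact (IccExtend_of_right_le hab.le (fun s : Icc a b => f s) hs).symm

theorem measure_singleton_stieltjesOfMonotoneOn {f : ℝ → ℝ} {a b u : ℝ} (hab : a < b)
    (hf : MonotoneOn f (Icc a b)) (hrc : ∀ s ∈ Ico a b, ContinuousWithinAt f (Ici s) s)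
    (hu : u ∈ Ioc a b) :
    ((stieltjesOfMonotoneOn hab hf hrc).measure {u}).toReal = f u - Function.leftLim f u := by
  set F := stieltjesOfMonotoneOn hab hf hrc
  have heq := stieltjesOfMonotoneOn_eqOn hab hf hrc
  have hleft : Function.leftLim f u = Function.leftLim F u := by
    refine leftLim_eq_of_tendsto ((F.mono.tendsto_leftLim u).congr' ?_)
    filter_upwards [Ioo_mem_nhdsLT hu.1] with s hs
    exact heq ⟨hs.1.le, hs.2.le.trans hu.2⟩
  rw [F.measure_singleton, ENNReal.toReal_ofReal (sub_nonneg.2 (F.mono.leftLim_le le_rfl)), hleft,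
    heq (Ioc_subset_Icc_self hu)]

theorem PureJumpOn.mutuallySingular {f : ℝ → ℝ} {t : ℝ} (hpj : PureJumpOn f t) (ht : 0 < t)
    (hf : MonotoneOn f (Icc 0 t)) (hrc : ∀ s ∈ Ico 0 t, ContinuousWithinAt f (Ici s) s) :
    (stieltjesOfMonotoneOn ht hf hrc).measure ⟂ₘ volume := by
  set μ := (stieltjesOfMonotoneOn ht hf hrc).measure
  have huniv : μ univ = ENNReal.ofReal (f t - f 0) := measure_univ_stieltjesOfMonotoneOn ht hf hrc
  have : IsFiniteMeasure μ := ⟨huniv ▸ ENNReal.ofReal_lt_top⟩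
  have hjumps : f t - f 0 = (∑' u : Ioc 0 t, μ {(u : ℝ)}).toReal := by
    rw [ENNReal.tsum_toReal_eq fun u => measure_ne_top μ _, hpj t ⟨ht.le, le_rfl⟩,
      add_sub_cancel_left]
    exact tsum_congr fun u => (measure_singleton_stieltjesOfMonotoneOn ht hf hrc u.2).symm
  refine mutuallySingular_of_univ_le_tsum_singleton ?_
  calc μ univ = ENNReal.ofReal (∑' u : Ioc 0 t, μ {(u : ℝ)}).toReal := by rw [huniv, hjumps]
    _ ≤ ∑' u : Ioc 0 t, μ {(u : ℝ)} := ENNReal.ofReal_toReal_le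
    _ ≤ ∑' u, μ {u} := ENNReal.tsum_comp_le_tsum_of_injective Subtype.val_injective fun u => μ {u}

theorem PureJumpOn.ae_hasDerivAt_zero {f : ℝ → ℝ} {t : ℝ} (hpj : PureJumpOn f t) (ht : 0 < t)
    (hf : MonotoneOn f (Icc 0 t)) (hrc : ∀ s ∈ Ico 0 t, ContinuousWithinAt f (Ici s) s) :
    ∀ᵐ s, s ∈ Ioo 0 t → HasDerivAt f 0 s := by
  filter_upwards [(stieltjesOfMonotoneOn ht hf hrc).ae_hasDerivAt,
    (hpj.mutuallySingular ht hf hrc).rnDeriv_ae_eq_zero] with s hder hzero hs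
  rw [hzero] at hder
  refine HasDerivAt.congr_of_eventuallyEq (by simpa using hder) ?_
  filter_upwards [Icc_mem_nhds hs.1 hs.2] with r hr
  exact (stieltjesOfMonotoneOn_eqOn ht hf hrc hr).symm

end SingularPath

section RunningInf

/-- The running infimum `inf_{a ≤ v ≤ s} g v` at time `s` of the path `g` started at time `a`. -/
noncomputable def runningInf (g : ℝ → ℝ) (a s : ℝ) : ℝ :=
  sInf (g '' Icc a s)

variable {g : ℝ → ℝ} {a b c d m p s v w : ℝ}

theorem runningInf_le (hg : BddBelow (g '' Icc a b)) (hsb : s ≤ b) (hv : v ∈ Icc a s) :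
    runningInf g a s ≤ g v :=
  csInf_le (hg.mono (by gcongr)) (mem_image_of_mem g hv)

theorem runningInf_le_self (hg : BddBelow (g '' Icc a b)) (hs : s ∈ Icc a b) :
    runningInf g a s ≤ g s :=
  runningInf_le hg hs.2 (right_mem_Icc.2 hs.1)

theorem le_runningInf (has : a ≤ s) (h : ∀ v ∈ Icc a s, m ≤ g v) : m ≤ runningInf g a s :=
  le_csInf ((nonempty_Icc.2 has).image g) (forall_mem_image.2 h)

theorem antitoneOn_runningInf (hg : BddBelow (g '' Icc a b)) :
    AntitoneOn (runningInf g a) (Icc a b) := fun _ hr _ hs hrs =>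
  csInf_le_csInf (hg.mono (by gcongr; exact hs.2)) ((nonempty_Icc.2 hr.1).image g) (by gcongr)

theorem le_runningInf_of_le_of_forall_Ioc (hg : BddBelow (g '' Icc a b)) (hsb : s ≤ b)
    (haw : a ≤ w) (hs : m ≤ runningInf g a s) (h : ∀ v ∈ Ioc s w, m ≤ g v) :
    m ≤ runningInf g a w := by
  refine le_runningInf haw fun v hv => ?_
  rcases le_or_gt v s with hvs | hsv
  · exact hs.trans (runningInf_le hg hsb ⟨hv.1, hvs⟩)
  · exact h v ⟨hsv, hv.2⟩

theorem eventually_le_runningInf (hg : BddBelow (g '' Icc a b)) (hs : s ∈ Icc a b)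
    (hcont : ContinuousWithinAt g (Ici s) s) (hm : m ≤ runningInf g a s) (hlt : m < g s) :
    ∀ᶠ w in 𝓝[>] s, m ≤ runningInf g a w := by
  obtain ⟨r, hsr, hr⟩ := mem_nhdsGE_iff_exists_Ico_subset.1 (hcont.eventually_const_lt hlt)
  filter_upwards [Ioo_mem_nhdsGT hsr] with w hw
  exact le_runningInf_of_le_of_forall_Ioc hg hs.2 (hs.1.trans hw.1.le) hm fun v hv =>
    (hr ⟨hv.1.le, hv.2.trans_lt hw.2⟩).le

theorem bddBelow_image_of_monotoneOn_add_mul (hc : 0 ≤ c)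
    (hg : MonotoneOn (fun s => g s + c * s) (Icc a b)) : BddBelow (g '' Icc a b) := by
  refine ⟨g a + c * a - c * b, forall_mem_image.2 fun v hv => ?_⟩
  have hav := hg (left_mem_Icc.2 (hv.1.trans hv.2)) hv hv.1
  have hvb := mul_le_mul_of_nonneg_left hv.2 hc
  dsimp only at hav
  linarith

theorem lipschitzOnWith_runningInf (hc : 0 ≤ c)
    (hg : MonotoneOn (fun s => g s + c * s) (Icc a b)) :
    LipschitzOnWith c.toNNReal (runningInf g a) (Icc a b) := by
  have hbdd := bddBelow_image_of_monotoneOn_add_mul hc hg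
  refine LipschitzOnWith.of_le_add_mul _ fun r hr s hs => ?_
  rw [Real.coe_toNNReal c hc, Real.dist_eq]
  rcases le_total s r with hsr | hrs
  · have := antitoneOn_runningInf hbdd hs hr hsr
    have : 0 ≤ c * |r - s| := by positivity
    linarith
  rw [abs_sub_comm, abs_of_nonneg (sub_nonneg.2 hrs), ← sub_le_iff_le_add]
  refine le_runningInf_of_le_of_forall_Ioc hbdd hr.2 hs.1 ?_ fun v hv => ?_
  · have : 0 ≤ c * (s - r) := mul_nonneg hc (sub_nonneg.2 hrs)
    linarith
  · have hgv := hg hr ⟨hr.1.trans hv.1.le, hv.2.trans hs.2⟩ hv.1.le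
    have hJr := runningInf_le_self hbdd hr
    have hcv := mul_le_mul_of_nonneg_left hv.2 hc
    dsimp only at hgv
    linarith

/-- The level is hit at the last time at which the running infimum is still at least `m`. -/
theorem exists_eq_of_le_of_lt_of_monotoneOn_add_mul (hc : 0 ≤ c) (hab : a ≤ b)
    (hg : MonotoneOn (fun s => g s + c * s) (Icc a b))
    (hrc : ∀ s ∈ Ico a b, ContinuousWithinAt g (Ici s) s) (ha : m ≤ g a) (hb : g b < m) :
    ∃ s ∈ Ico a b, g s = m := by
  have hbdd := bddBelow_image_of_monotoneOn_add_mul hc hg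
  obtain ⟨r, ⟨hr, hmr⟩, hlast⟩ : ∃ r, IsGreatest {s ∈ Icc a b | m ≤ runningInf g a s} r := by
    refine IsCompact.exists_isGreatest ?_ ⟨a, left_mem_Icc.2 hab, by simpa [runningInf] using ha⟩
    exact isCompact_Icc.of_isClosed_subset ((lipschitzOnWith_runningInf hc
      hg).continuousOn.preimage_isClosed_of_isClosed isClosed_Icc isClosed_Ici) (sep_subset _ _)
  have hmgr : m ≤ g r := hmr.trans (runningInf_le_self hbdd hr)
  have hrb : r < b := hr.2.lt_of_ne fun h => (h ▸ hmgr).not_gt hb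
  refine ⟨r, ⟨hr.1, hrb⟩, hmgr.antisymm' (not_lt.1 fun hlt => ?_)⟩
  obtain ⟨w, hmw, hw⟩ := ((eventually_le_runningInf hbdd hr (hrc r ⟨hr.1, hrb⟩) hmr
    hlt).and (Ioo_mem_nhdsGT hrb)).exists
  exact hw.1.not_ge (hlast ⟨⟨hr.1.trans hw.1.le, hw.2.le⟩, hmw⟩)

theorem deriv_runningInf_of_eq (hg : BddBelow (g '' Icc a b)) (hs : s ∈ Ioo a b)
    (hd : HasDerivAt g d s) (hJ : DifferentiableAt ℝ (runningInf g a) s)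
    (heq : runningInf g a s = g s) : deriv (runningInf g a) s = d := by
  have hmin : IsLocalMin (g - runningInf g a) s := by
    filter_upwards [Ioo_mem_nhds hs.1 hs.2] with w hw
    simpa [heq] using runningInf_le_self hg (Ioo_subset_Icc_self hw)
  exact (sub_eq_zero.1 (hmin.hasDerivAt_eq_zero (hd.sub hJ.hasDerivAt))).symm

theorem deriv_runningInf_of_lt (hg : BddBelow (g '' Icc a b)) (hs : s ∈ Ioo a b)
    (hcont : ContinuousWithinAt g (Ici s) s) (hJ : DifferentiableAt ℝ (runningInf g a) s)
    (hlt : runningInf g a s < g s) : deriv (runningInf g a) s = 0 := by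
  have hconst : ∀ᶠ w in 𝓝[>] s, runningInf g a w = runningInf g a s := by
    filter_upwards [Ioo_mem_nhdsGT hs.2,
      eventually_le_runningInf hg (Ioo_subset_Icc_self hs) hcont le_rfl hlt] with w hw hle
    exact (antitoneOn_runningInf hg (Ioo_subset_Icc_self hs) ⟨hs.1.le.trans hw.1.le, hw.2.le⟩
      hw.1.le).antisymm hle
  exact (uniqueDiffWithinAt_Ioi s).eq_deriv _ hJ.hasDerivAt.hasDerivWithinAt
    ((hasDerivWithinAt_const s (Ioi s) _).congr_of_eventuallyEq hconst rfl)

theorem lt_of_antitoneOn_of_deriv_ne_zero (hg : AntitoneOn g (Icc w s)) (hws : w < s)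
    (hd : deriv g s ≠ 0) : g s < g w := by
  by_contra! hle
  have hconst : ∀ᶠ r in 𝓝[<] s, g r = g s := by
    filter_upwards [Ioo_mem_nhdsLT hws] with r hr
    have hr' := Ioo_subset_Icc_self hr
    exact ((hg (left_mem_Icc.2 hws.le) hr' hr'.1).trans hle).antisymm
      (hg hr' (right_mem_Icc.2 hws.le) hr'.2)
  exact hd <| (uniqueDiffWithinAt_Iio s).eq_deriv _
    (differentiableAt_of_deriv_ne_zero hd).hasDerivAt.hasDerivWithinAt
    ((hasDerivWithinAt_const s (Iio s) _).congr_of_eventuallyEq hconst rfl)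

theorem ae_deriv_runningInf (hc : 0 ≤ c) (hap : a ≤ p)
    (hg : MonotoneOn (fun s => g s + c * s) (Icc a b))
    (hder : ∀ᵐ s, s ∈ Ioo p b → HasDerivAt g (-c) s) :
    ∀ᵐ s, s ∈ Ioo p b →
      deriv (runningInf g a) s = if runningInf g a s = g s then -c else 0 := by
  have hbdd := bddBelow_image_of_monotoneOn_add_mul hc hg
  filter_upwards [(lipschitzOnWith_runningInf hc hg).ae_differentiableWithinAt_of_mem, hder]
    with s hdiff hder hsp
  have hs : s ∈ Ioo a b := ⟨hap.trans_lt hsp.1, hsp.2⟩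
  have hJ := (hdiff (Ioo_subset_Icc_self hs)).differentiableAt (Icc_mem_nhds hs.1 hs.2)
  split_ifs with heq
  · exact deriv_runningInf_of_eq hbdd hs (hder hsp) hJ heq
  · refine deriv_runningInf_of_lt hbdd hs (hder hsp).continuousAt.continuousWithinAt hJ ?_
    exact (runningInf_le_self hbdd (Ioo_subset_Icc_self hs)).lt_of_ne heq

theorem ae_runningInf_lt_of_eq (hc : 0 < c) (hap : a ≤ p)
    (hg : MonotoneOn (fun s => g s + c * s) (Icc a b))
    (hder : ∀ᵐ s, s ∈ Ioo p b → HasDerivAt g (-c) s) :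
    ∀ᵐ s, s ∈ Ioo p b → runningInf g a s = g s →
      ∀ w ∈ Ico a s, runningInf g a s < runningInf g a w := by
  filter_upwards [ae_deriv_runningInf hc.le hap hg hder] with s hderiv hs heq w hw
  have hanti := antitoneOn_runningInf (bddBelow_image_of_monotoneOn_add_mul hc.le hg)
  refine lt_of_antitoneOn_of_deriv_ne_zero (hanti.mono (Icc_subset_Icc hw.1 hs.2.le)) hw.2 ?_
  rw [hderiv hs, if_pos heq]
  exact (neg_neg_of_pos hc).ne

theorem volume_runningInf_eq (hc : 0 < c) (hap : a ≤ p) (hpb : p ≤ b)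
    (hg : MonotoneOn (fun s => g s + c * s) (Icc a b))
    (hder : ∀ᵐ s, s ∈ Ioo p b → HasDerivAt g (-c) s) :
    volume {s ∈ Ioo p b | runningInf g a s = g s} =
      ENNReal.ofReal ((runningInf g a p - runningInf g a b) / c) := by
  have hderiv := ae_deriv_runningInf hc.le hap hg hder
  set J := runningInf g a
  set D : Set ℝ := {s ∈ Ioo p b | deriv J s = -c}
  have hDmeas : MeasurableSet D :=
    measurableSet_Ioo.inter (measurable_deriv J (measurableSet_singleton (-c)))
  have hDfin : volume D ≠ ∞ := ((measure_mono (sep_subset _ _)).trans_lt measure_Ioo_lt_top).ne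
  have hcontact : volume {s ∈ Ioo p b | J s = g s} = volume D := by
    refine measure_congr ?_
    filter_upwards [hderiv] with s hs
    refine propext (and_congr_right fun hsI => ?_)
    rw [hs hsI]
    simp [hc.ne']
  have hLip : LipschitzOnWith c.toNNReal J (uIcc p b) :=
    (lipschitzOnWith_runningInf hc.le hg).mono (by rw [uIcc_of_le hpb]; gcongr)
  have hdecrease : J b - J p = -(c * volume.real D) :=
    calc J b - J p = ∫ s in p..b, deriv J s :=
          hLip.absolutelyContinuousOnInterval.integral_deriv_eq_sub.symm
      _ = ∫ s in Ioo p b, D.indicator (fun _ => -c) s := by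
          rw [intervalIntegral.integral_of_le hpb, integral_Ioc_eq_integral_Ioo]
          refine setIntegral_congr_ae measurableSet_Ioo ?_
          filter_upwards [hderiv] with s hs hsI
          by_cases hsD : deriv J s = -c
          · rw [indicator_of_mem (show s ∈ D from ⟨hsI, hsD⟩), hsD]
          · rw [indicator_of_notMem fun h : s ∈ D => hsD h.2]
            grind
      _ = -(c * volume.real D) := by
          rw [setIntegral_indicator hDmeas, inter_eq_self_of_subset_right (sep_subset _ _),
            setIntegral_const, smul_eq_mul, mul_neg, mul_comm]
  rw [hcontact, ← ofReal_measureReal hDfin]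
  congr 1
  field_simp
  linarith

end RunningInf

section CyclicExtension

/-- The path `g` on `[0, t)` continued on `[t, 2t]` by a copy of `g` started at the height `g t`;
every shift `theta t u g` is read off it through the window `[u, u + t)`. -/
noncomputable def cyclicExt (t : ℝ) (g : ℝ → ℝ) (s : ℝ) : ℝ :=
  if s < t then g s else g (s - t) + g t - g 0

variable {g : ℝ → ℝ} {c s t u : ℝ}

theorem theta_eq_cyclicExt_sub (hu : u < t) (s : ℝ) :
    theta t u g s = cyclicExt t g (s + u) - cyclicExt t g u + g 0 := by
  simp only [theta, cyclicExt, if_pos hu, lt_sub_iff_add_lt]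
  split_ifs
  · ring
  · rw [show s - (t - u) = s + u - t by ring]
    ring

theorem cyclicExt_add (hs : s ∈ Icc 0 t) :
    cyclicExt t g (s + t) = cyclicExt t g s + (g t - g 0) := by
  rw [cyclicExt, if_neg (by linarith [hs.1]), add_sub_cancel_right, cyclicExt]
  rcases hs.2.lt_or_eq with hst | rfl
  · rw [if_pos hst]
    ring
  · simp only [lt_irrefl, if_false, sub_self]
    ring

theorem cyclicExt_add_mul (t : ℝ) (g : ℝ → ℝ) (c : ℝ) :
    cyclicExt t (fun s => g s + c * s) = fun s => cyclicExt t g s + c * s := by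
  funext s
  simp only [cyclicExt]
  split_ifs <;> ring

theorem monotoneOn_cyclicExt (hg : MonotoneOn g (Icc 0 t)) :
    MonotoneOn (cyclicExt t g) (Icc 0 (2 * t)) := by
  intro r hr s hs hrs
  have ht : 0 ≤ t := by linarith [hr.1.trans hr.2]
  simp only [cyclicExt]
  split_ifs with hrt hst hst
  · exact hg ⟨hr.1, hrt.le⟩ ⟨hs.1, hst.le⟩ hrs
  · have := hg ⟨hr.1, hrt.le⟩ ⟨ht, le_rfl⟩ hrt.le
    have := hg ⟨le_rfl, ht⟩ ⟨sub_nonneg.2 (not_lt.1 hst), by linarith [hs.2]⟩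
      (sub_nonneg.2 (not_lt.1 hst))
    linarith
  · exact absurd (hrs.trans_lt hst) hrt
  · have := hg ⟨sub_nonneg.2 (not_lt.1 hrt), by linarith [hr.2]⟩
      ⟨sub_nonneg.2 (not_lt.1 hst), by linarith [hs.2]⟩ (sub_le_sub_right hrs t)
    linarith

theorem hasDerivAt_cyclicExt {d : ℝ} (hts : t < s) (hg : HasDerivAt g d (s - t)) :
    HasDerivAt (cyclicExt t g) d s := by
  have hshift : HasDerivAt (fun r => g (r - t) + g t - g 0) d s :=
    ((hg.comp_sub_const s t).add_const (g t)).sub_const (g 0)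
  refine hshift.congr_of_eventuallyEq ?_
  filter_upwards [Ioi_mem_nhds hts] with r hr
  exact if_neg (not_lt.2 (le_of_lt hr))

theorem ae_hasDerivAt_cyclicExt {d : ℝ} (hg : ∀ᵐ s, s ∈ Ioo 0 t → HasDerivAt g d s) :
    ∀ᵐ s, s ∈ Ioo t (2 * t) → HasDerivAt (cyclicExt t g) d s := by
  filter_upwards [(measurePreserving_sub_right volume t).quasiMeasurePreserving.ae hg] with s hs hst
  exact hasDerivAt_cyclicExt hst.1 (hs ⟨by linarith [hst.1], by linarith [hst.2]⟩)

theorem continuousWithinAt_theta (hu : u ∈ Icc 0 t)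
    (hrc : ∀ s ∈ Ico 0 t, ContinuousWithinAt g (Ici s) s) (hs : s ∈ Ico 0 t) :
    ContinuousWithinAt (theta t u g) (Ici s) s := by
  have hshift : ∀ v, s + v ∈ Ico 0 t → ContinuousWithinAt (fun r => g (r + v)) (Ici s) s :=
    fun v hv => (hrc _ hv).comp (f := fun r => r + v) (by fun_prop) fun r hr =>
      add_le_add_left (mem_Ici.1 hr) v
  rcases lt_or_ge s (t - u) with hsu | hus
  · have hev : ∀ᶠ r in 𝓝[≥] s, theta t u g r = g 0 + g (r + u) - g u := by
      filter_upwards [mem_nhdsWithin_of_mem_nhds (Iio_mem_nhds hsu)] with r hr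
      exact if_pos hr
    exact ((continuousWithinAt_const.add (hshift u ⟨add_nonneg hs.1 hu.1, by linarith⟩)).sub
      continuousWithinAt_const).congr_of_eventuallyEq hev (if_pos hsu)
  · have hcont := hshift (-(t - u)) ⟨by linarith, by linarith [hs.2, hu.2]⟩
    simp only [← sub_eq_add_neg] at hcont
    exact ((hcont.add continuousWithinAt_const).sub continuousWithinAt_const).congr
      (fun r hr => if_neg (not_lt.2 (hus.trans hr))) (if_neg (not_lt.2 hus))

theorem runningInf_cyclicExt_two_mul (ht : 0 ≤ t) (hgt : g t ≤ g 0)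
    (hbdd : BddBelow (cyclicExt t g '' Icc 0 (2 * t))) :
    runningInf (cyclicExt t g) 0 (2 * t) = runningInf (cyclicExt t g) 0 t + (g t - g 0) := by
  have htt : t ≤ 2 * t := by linarith
  refine le_antisymm ?_ ?_
  · rw [← sub_le_iff_le_add]
    refine le_runningInf ht fun v hv => ?_
    have := runningInf_le hbdd le_rfl (v := v + t) ⟨by linarith [hv.1], by linarith [hv.2]⟩
    rw [cyclicExt_add hv] at this
    linarith
  · refine le_runningInf_of_le_of_forall_Ioc hbdd htt (by linarith) (by linarith) fun v hv => ?_
    have hvt : v - t ∈ Icc 0 t := ⟨by linarith [hv.1], by linarith [hv.2]⟩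
    rw [← sub_add_cancel v t, cyclicExt_add hvt]
    gcongr
    exact runningInf_le hbdd htt hvt

theorem forall_le_theta_iff_runningInf_eq (hu : u ∈ Ico 0 t) (hgt : g t ≤ g 0)
    (hbdd : BddBelow (cyclicExt t g '' Icc 0 (2 * t))) :
    (∀ s ∈ Ico 0 t, g t ≤ theta t u g s) ↔
      runningInf (cyclicExt t g) 0 (u + t) = cyclicExt t g (u + t) := by
  have hend : cyclicExt t g (u + t) = cyclicExt t g u + (g t - g 0) :=
    cyclicExt_add ⟨hu.1, hu.2.le⟩
  have htheta : ∀ s, g t ≤ theta t u g s ↔ cyclicExt t g (u + t) ≤ cyclicExt t g (s + u) := by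
    intro s
    rw [theta_eq_cyclicExt_sub hu.2, hend]
    constructor <;> intro h <;> linarith
  have hut : u + t ∈ Icc 0 (2 * t) := ⟨by linarith [hu.1, hu.2], by linarith [hu.2]⟩
  simp only [htheta]
  constructor
  · intro h
    have hwindow : ∀ v ∈ Icc u (u + t), cyclicExt t g (u + t) ≤ cyclicExt t g v := by
      intro v hv
      rcases hv.2.lt_or_eq with hvt | rfl
      · simpa using h (v - u) ⟨sub_nonneg.2 hv.1, by linarith⟩
      · exact le_rfl
    refine (runningInf_le_self hbdd hut).antisymm (le_runningInf hut.1 fun v hv => ?_)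
    rcases le_or_gt u v with huv | hvu
    · exact hwindow v ⟨huv, hv.2⟩
    · have hadd := cyclicExt_add (g := g) ⟨hv.1, (hvu.trans hu.2).le⟩
      have hper := hwindow (v + t) ⟨by linarith [hv.1, hu.2], by linarith⟩
      linarith
  · intro h s hs
    rw [← h]
    exact runningInf_le hbdd hut.2 ⟨add_nonneg hs.1 hu.1, by linarith [hs.2]⟩

theorem volume_runningInf_cyclicExt_eq (hc : 0 < c) (ht : 0 ≤ t)
    (hg : MonotoneOn (fun s => g s + c * s) (Icc 0 t))
    (hder : ∀ᵐ s, s ∈ Ioo 0 t → HasDerivAt g (-c) s) (hgt : g t ≤ g 0) :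
    volume {u ∈ Ioo 0 t | runningInf (cyclicExt t g) 0 (u + t) = cyclicExt t g (u + t)} =
      ENNReal.ofReal ((g 0 - g t) / c) := by
  have hmono := monotoneOn_cyclicExt hg
  rw [cyclicExt_add_mul] at hmono
  have hbdd := bddBelow_image_of_monotoneOn_add_mul hc.le hmono
  have hvol := volume_runningInf_eq hc ht (by linarith) hmono (ae_hasDerivAt_cyclicExt hder)
  rw [runningInf_cyclicExt_two_mul ht hgt hbdd, ← measure_preimage_add_right volume t] at hvol
  convert hvol using 2
  · ext u
    simp [two_mul]
  · ring

end CyclicExtension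

section PathEvents

/-- The paths that are at least `a` on `[0, t)`. Only rational times are tested so that the event
is measurable; for right-continuous paths this makes no difference. -/
def staysAbove (t a : ℝ) : Set (ℝ → ℝ) :=
  {h | ∀ q : ℚ, (q : ℝ) ∈ Ico 0 t → a ≤ h q}

/-- The paths that are bounded away from `a` from above on every compact subinterval of `[0, t)`,
tested at rational times only. -/
def staysWellAbove (t a : ℝ) : Set (ℝ → ℝ) :=
  {h | ∀ r : ℚ, (r : ℝ) ∈ Ico 0 t → ∃ ε : ℚ, 0 < ε ∧
    ∀ q : ℚ, (q : ℝ) ∈ Icc 0 (r : ℝ) → a + ε ≤ h q}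

variable {a t : ℝ} {g h : ℝ → ℝ}

theorem measurableSet_staysAbove (t a : ℝ) : MeasurableSet (staysAbove t a) := by
  refine measurableSet_setOfPred.2 (Measurable.forall fun q => Measurable.imp measurable_const ?_)
  exact measurableSet_setOfPred.1 (measurableSet_le measurable_const (measurable_pi_apply _))

theorem measurableSet_staysWellAbove (t a : ℝ) : MeasurableSet (staysWellAbove t a) := by
  refine measurableSet_setOfPred.2 (Measurable.forall fun r => Measurable.imp measurable_const <|
    Measurable.exists fun ε => Measurable.and measurable_const <|
    Measurable.forall fun q => Measurable.imp measurable_const ?_)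
  exact measurableSet_setOfPred.1 (measurableSet_le measurable_const (measurable_pi_apply _))

theorem dependsOn_mem_staysAbove (t a : ℝ) : DependsOn (· ∈ staysAbove t a) (Ico 0 t) := by
  intro g h hgh
  refine propext (forall₂_congr fun q hq => ?_)
  rw [hgh q hq]

theorem dependsOn_mem_staysWellAbove (t a : ℝ) : DependsOn (· ∈ staysWellAbove t a) (Ico 0 t) := by
  intro g h hgh
  refine propext (forall₂_congr fun r hr => exists_congr fun ε => and_congr_right fun _ =>
    forall₂_congr fun q hq => ?_)
  rw [hgh q ⟨hq.1, hq.2.trans_lt hr.2⟩]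

theorem staysWellAbove_subset_staysAbove (t a : ℝ) : staysWellAbove t a ⊆ staysAbove t a := by
  intro h hh q hq
  obtain ⟨ε, hε, hle⟩ := hh q hq
  have hε' : (0 : ℝ) < ε := mod_cast hε
  linarith [hle q ⟨hq.1, le_rfl⟩]

theorem le_of_forall_rat_le {b s : ℝ} (hh : ContinuousWithinAt h (Ici s) s) (hsb : s < b)
    (H : ∀ q : ℚ, (q : ℝ) ∈ Ioo s b → a ≤ h q) : a ≤ h s := by
  refine ge_of_tendsto_of_frequently (hh.mono Ioi_subset_Ici_self) ?_
  rw [(nhdsGT_basis s).frequently_iff]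
  intro r hsr
  obtain ⟨q, hq, hq'⟩ := exists_rat_btwn (lt_min hsr hsb)
  exact ⟨q, ⟨hq, hq'.trans_le (min_le_left _ _)⟩, H q ⟨hq, hq'.trans_le (min_le_right _ _)⟩⟩

theorem mem_staysAbove_iff (hh : ∀ s ∈ Ico 0 t, ContinuousWithinAt h (Ici s) s) :
    h ∈ staysAbove t a ↔ ∀ s ∈ Ico 0 t, a ≤ h s :=
  ⟨fun H s hs => le_of_forall_rat_le (hh s hs) hs.2 fun q hq => H q ⟨hs.1.trans hq.1.le, hq.2⟩,
    fun H q hq => H q hq⟩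

theorem lt_of_mem_staysWellAbove (hh : ∀ s ∈ Ico 0 t, ContinuousWithinAt h (Ici s) s)
    (H : h ∈ staysWellAbove t a) {s : ℝ} (hs : s ∈ Ico 0 t) : a < h s := by
  obtain ⟨r, hsr, hrt⟩ := exists_rat_btwn hs.2
  obtain ⟨ε, hε, hle⟩ := H r ⟨hs.1.trans hsr.le, hrt⟩
  have hε' : (0 : ℝ) < ε := mod_cast hε
  linarith [le_of_forall_rat_le (hh s hs) hsr fun q hq => hle q ⟨hs.1.trans hq.1.le, hq.2.le⟩]

theorem mem_staysAbove_of_forall_ne {c : ℝ} (hc : 0 ≤ c)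
    (hg : MonotoneOn (fun s => g s + c * s) (Icc 0 t))
    (hrc : ∀ s ∈ Ico 0 t, ContinuousWithinAt g (Ici s) s) (ha : a ≤ g 0)
    (hne : ∀ s ∈ Ico 0 t, g s ≠ a) : g ∈ staysAbove t a := by
  refine fun q hq => not_lt.1 fun hlt => ?_
  obtain ⟨s, hs, heq⟩ := exists_eq_of_le_of_lt_of_monotoneOn_add_mul hc hq.1
    (hg.mono (Icc_subset_Icc_right hq.2.le)) (fun s hs => hrc s ⟨hs.1, hs.2.trans hq.2⟩) ha hlt
  exact hne s ⟨hs.1, hs.2.trans hq.2⟩ heq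

theorem theta_mem_staysWellAbove {u : ℝ} (hu : u ∈ Ico 0 t)
    (hbdd : BddBelow (cyclicExt t g '' Icc 0 (2 * t)))
    (hlt : ∀ w ∈ Ico 0 (u + t), cyclicExt t g (u + t) < runningInf (cyclicExt t g) 0 w) :
    theta t u g ∈ staysWellAbove t (g t) := by
  intro r hr
  obtain ⟨ε, hε, hεlt⟩ := exists_rat_btwn <|
    sub_pos.2 (hlt (r + u) ⟨add_nonneg hr.1 hu.1, by linarith [hr.2]⟩)
  refine ⟨ε, mod_cast hε, fun q hq => ?_⟩
  have hinf := runningInf_le hbdd (s := r + u) (v := q + u) (by linarith [hr.2, hu.2])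
    ⟨add_nonneg hq.1 hu.1, by linarith [hq.2]⟩
  have hend := cyclicExt_add (g := g) ⟨hu.1, hu.2.le⟩
  rw [theta_eq_cyclicExt_sub hu.2]
  linarith

variable {A : Set (ℝ → ℝ)} {c : ℝ}

theorem ae_theta_mem_iff_runningInf_eq (hc : 0 < c) (ht : 0 ≤ t)
    (hg : MonotoneOn (fun s => g s + c * s) (Icc 0 t))
    (hrc : ∀ s ∈ Ico 0 t, ContinuousWithinAt g (Ici s) s)
    (hder : ∀ᵐ s, s ∈ Ioo 0 t → HasDerivAt g (-c) s) (hgt : g t ≤ g 0)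
    (hwell : staysWellAbove t (g t) ⊆ A) (habove : A ⊆ staysAbove t (g t)) :
    ∀ᵐ u, u ∈ Ioo 0 t → (theta t u g ∈ A ↔
      runningInf (cyclicExt t g) 0 (u + t) = cyclicExt t g (u + t)) := by
  have hmono := monotoneOn_cyclicExt hg
  rw [cyclicExt_add_mul] at hmono
  have hbdd := bddBelow_image_of_monotoneOn_add_mul hc.le hmono
  filter_upwards [(measurePreserving_add_right volume t).quasiMeasurePreserving.ae
    (ae_runningInf_lt_of_eq hc ht hmono (ae_hasDerivAt_cyclicExt hder))] with u hlt hu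
  have hu' := Ioo_subset_Ico_self hu
  refine ⟨fun h => (forall_le_theta_iff_runningInf_eq hu' hgt hbdd).1 ?_, fun heq => hwell ?_⟩
  · exact (mem_staysAbove_iff fun s hs =>
      continuousWithinAt_theta (Ioo_subset_Icc_self hu) hrc hs).1 (habove h)
  · refine theta_mem_staysWellAbove hu' hbdd fun w hw => ?_
    rw [← heq]
    exact hlt ⟨by linarith [hu.1], by linarith [hu.2]⟩ heq w hw

theorem volume_theta_mem (hc : 0 < c) (ht : 0 ≤ t)
    (hg : MonotoneOn (fun s => g s + c * s) (Icc 0 t))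
    (hrc : ∀ s ∈ Ico 0 t, ContinuousWithinAt g (Ici s) s)
    (hder : ∀ᵐ s, s ∈ Ioo 0 t → HasDerivAt g (-c) s) (hgt : g t ≤ g 0)
    (hwell : staysWellAbove t (g t) ⊆ A) (habove : A ⊆ staysAbove t (g t)) :
    volume {u ∈ Ioo 0 t | theta t u g ∈ A} = ENNReal.ofReal ((g 0 - g t) / c) := by
  rw [← volume_runningInf_cyclicExt_eq hc ht hg hder hgt]
  refine measure_congr ?_
  filter_upwards [ae_theta_mem_iff_runningInf_eq hc ht hg hrc hder hgt hwell habove] with u hu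
  exact propext (and_congr_right hu)

end PathEvents

section MeanOccupation

variable {Ω : Type*} [MeasurableSpace Ω] {X : Ω → ℝ → ℝ} {t : ℝ}

theorem tendsto_floor_add_one_div_nhdsGE (s : ℝ) :
    Tendsto (fun n : ℕ => (⌊((n : ℝ) + 1) * s⌋ + 1 : ℝ) / (n + 1)) atTop (𝓝[≥] s) := by
  have hpos : ∀ n : ℕ, (0 : ℝ) < n + 1 := fun n => n.cast_add_one_pos
  have hlower : ∀ n : ℕ, s ≤ (⌊((n : ℝ) + 1) * s⌋ + 1 : ℝ) / (n + 1) := fun n => by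
    rw [le_div_iff₀' (hpos n)]
    exact (Int.lt_floor_add_one _).le
  have hupper : ∀ n : ℕ, (⌊((n : ℝ) + 1) * s⌋ + 1 : ℝ) / (n + 1) ≤ s + 1 / (n + 1) := fun n => by
    rw [div_le_iff₀' (hpos n), mul_add, mul_one_div_cancel (hpos n).ne']
    gcongr
    exact Int.floor_le _
  refine tendsto_nhdsWithin_iff.2 ⟨?_, Eventually.of_forall hlower⟩
  refine tendsto_of_tendsto_of_tendsto_of_le_of_le tendsto_const_nhds ?_ hlower hupper
  simpa using tendsto_const_nhds.add (tendsto_one_div_add_atTop_nhds_zero_nat (𝕜 := ℝ))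

theorem exists_measurable_uncurry_eq_of_continuousWithinAt (hX : Measurable X) :
    ∃ Z : Ω → ℝ → ℝ, Measurable (Function.uncurry Z) ∧
      ∀ ω s, ContinuousWithinAt (X ω) (Ici s) s → Z ω s = X ω s := by
  refine ⟨fun ω s => limsup (fun n : ℕ => X ω ((⌊((n : ℝ) + 1) * s⌋ + 1) / (n + 1))) atTop,
    Measurable.limsup fun n => ?_, fun ω s h => ?_⟩
  · have hgrid : Measurable fun p : Ω × ℤ => X p.1 ((p.2 + 1) / (n + 1)) :=
      measurable_from_prod_countable_left fun k =>
        (measurable_pi_apply (((k : ℝ) + 1) / ((n : ℝ) + 1))).comp hX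
    exact hgrid.comp (measurable_fst.prodMk (measurable_snd.const_mul _).floor)
  · exact (h.tendsto.comp (tendsto_floor_add_one_div_nhdsGE s)).limsup_eq

theorem exists_measurable_uncurry_eqOn_Icc (hX : Measurable X) (t : ℝ) :
    ∃ Z : Ω → ℝ → ℝ, Measurable (Function.uncurry Z) ∧
      ∀ ω, (∀ s ∈ Ico 0 t, ContinuousWithinAt (X ω) (Ici s) s) → EqOn (Z ω) (X ω) (Icc 0 t) := by
  obtain ⟨Z, hZ, hZX⟩ := exists_measurable_uncurry_eq_of_continuousWithinAt hX
  refine ⟨fun ω s => if s = t then X ω t else Z ω s, ?_, fun ω h s hs => ?_⟩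
  · exact Measurable.ite (measurable_snd (measurableSet_singleton t))
      ((measurable_pi_apply t).comp (hX.comp measurable_fst)) hZ
  · dsimp only
    split_ifs with hst
    · rw [hst]
    · exact hZX ω s (h s ⟨hs.1, hs.2.lt_of_ne hst⟩)

theorem measurable_uncurry_theta (hX : Measurable (Function.uncurry X)) (t : ℝ) :
    Measurable fun p : Ω × ℝ => theta t p.2 (X p.1) := by
  have hcomp : ∀ {f : Ω × ℝ → ℝ}, Measurable f → Measurable fun p => X p.1 (f p) :=
    fun hf => hX.comp (measurable_fst.prodMk hf)
  refine measurable_pi_iff.2 fun s => Measurable.ite ?_ ?_ ?_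
  · exact measurableSet_lt measurable_const (measurable_const.sub measurable_snd)
  · exact ((hcomp measurable_const).add (hcomp (by fun_prop))).sub (hcomp measurable_snd)
  · exact ((hcomp (by fun_prop)).add (hcomp measurable_const)).sub (hcomp measurable_snd)

theorem measurable_theta (hX : Measurable X) (t u : ℝ) : Measurable fun ω => theta t u (X ω) := by
  have hcoord : ∀ s, Measurable fun ω => X ω s := fun s => (measurable_pi_apply s).comp hX
  refine measurable_pi_iff.2 fun s => Measurable.ite (.const _) ?_ ?_
  · exact ((hcoord _).add (hcoord _)).sub (hcoord _)
  · exact ((hcoord _).add (hcoord _)).sub (hcoord _)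

theorem eqOn_theta {g h : ℝ → ℝ} {u : ℝ} (hgh : EqOn g h (Icc 0 t)) (hu : u ∈ Icc 0 t) :
    EqOn (theta t u g) (theta t u h) (Icc 0 t) := by
  have ht := hu.1.trans hu.2
  intro s hs
  simp only [theta, hgh ⟨le_rfl, ht⟩, hgh ⟨ht, le_rfl⟩, hgh hu]
  split_ifs with hsu
  · rw [hgh ⟨add_nonneg hs.1 hu.1, by linarith⟩]
  · rw [hgh ⟨by linarith, by linarith [hs.2, hu.2]⟩]

variable {P : Measure Ω} [SFinite P] {A : Set (ℝ → ℝ)}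

theorem lintegral_volume_theta_mem (hX : Measurable X)
    (hrc : ∀ᵐ ω ∂P, ∀ s ∈ Ico 0 t, ContinuousWithinAt (X ω) (Ici s) s)
    (hA : MeasurableSet A) (hdep : DependsOn (· ∈ A) (Icc 0 t)) :
    ∫⁻ ω, volume {u ∈ Ioo 0 t | theta t u (X ω) ∈ A} ∂P =
      ∫⁻ u in Ioo 0 t, P {ω | theta t u (X ω) ∈ A} := by
  obtain ⟨Z, hZ, hZX⟩ := exists_measurable_uncurry_eqOn_Icc hX t
  have hiff : ∀ᵐ ω ∂P, ∀ u ∈ Ioo 0 t, theta t u (Z ω) ∈ A ↔ theta t u (X ω) ∈ A := by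
    filter_upwards [hrc] with ω hω u hu
    exact (hdep fun s hs => eqOn_theta (hZX ω hω) (Ioo_subset_Icc_self hu) hs).to_iff
  have hE : MeasurableSet {p : Ω × ℝ | theta t p.2 (Z p.1) ∈ A} :=
    measurable_uncurry_theta hZ t hA
  calc ∫⁻ ω, volume {u ∈ Ioo 0 t | theta t u (X ω) ∈ A} ∂P
      = ∫⁻ ω, volume.restrict (Ioo 0 t) {u | theta t u (Z ω) ∈ A} ∂P := by
        refine lintegral_congr_ae ?_
        filter_upwards [hiff] with ω hω
        rw [Measure.restrict_apply' measurableSet_Ioo, inter_comm]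
        exact congrArg volume (ext fun u => and_congr_right fun hu => (hω u hu).symm)
    _ = ∫⁻ u in Ioo 0 t, P {ω | theta t u (Z ω) ∈ A} := by
        exact (Measure.prod_apply hE).symm.trans (Measure.prod_apply_symm hE)
    _ = ∫⁻ u in Ioo 0 t, P {ω | theta t u (X ω) ∈ A} := by
        refine setLIntegral_congr_fun measurableSet_Ioo fun u hu => measure_congr ?_
        filter_upwards [hiff] with ω hω
        exact propext (hω u hu)

theorem lintegral_volume_theta_mem_of_map_eq (hX : Measurable X)
    (hrc : ∀ᵐ ω ∂P, ∀ s ∈ Ico 0 t, ContinuousWithinAt (X ω) (Ici s) s)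
    (hinv : ∀ u ∈ Ioo 0 t, P.map (fun ω => theta t u (X ω)) = P.map X)
    (hA : MeasurableSet A) (hdep : DependsOn (· ∈ A) (Icc 0 t)) :
    ∫⁻ ω, volume {u ∈ Ioo 0 t | theta t u (X ω) ∈ A} ∂P =
      P {ω | X ω ∈ A} * ENNReal.ofReal t := by
  have hconst : ∀ u ∈ Ioo 0 t, P {ω | theta t u (X ω) ∈ A} = P {ω | X ω ∈ A} := fun u hu => by
    have := congrArg (fun μ => μ A) (hinv u hu)
    simp only [Measure.map_apply (measurable_theta hX t u) hA, Measure.map_apply hX hA] at this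
    exact this
  rw [lintegral_volume_theta_mem hX hrc hA hdep,
    setLIntegral_congr_fun measurableSet_Ioo hconst, setLIntegral_const, Real.volume_Ioo, sub_zero]

end MeanOccupation

section BallotProbability

variable {Ω : Type*} [MeasurableSpace Ω] {P : Measure Ω} [IsProbabilityMeasure P]
  {X : Ω → ℝ → ℝ} {A : Set (ℝ → ℝ)} {t x c : ℝ}

theorem measure_mem_of_map_theta_eq (ht : 0 < t) (hx : 0 ≤ x) (hc : 0 < c)
    (hX : Measurable X)
    (hmono : ∀ᵐ ω ∂P, MonotoneOn (fun s => X ω s + c * s) (Icc 0 t))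
    (hrc : ∀ᵐ ω ∂P, ∀ s ∈ Ico 0 t, ContinuousWithinAt (X ω) (Ici s) s)
    (hder : ∀ᵐ ω ∂P, ∀ᵐ s, s ∈ Ioo 0 t → HasDerivAt (X ω) (-c) s)
    (hX0 : ∀ᵐ ω ∂P, X ω 0 = 0) (hXt : ∀ᵐ ω ∂P, X ω t = -x)
    (hinv : ∀ u ∈ Ioo 0 t, P.map (fun ω => theta t u (X ω)) = P.map X)
    (hA : MeasurableSet A) (hdep : DependsOn (· ∈ A) (Icc 0 t))
    (hwell : staysWellAbove t (-x) ⊆ A) (habove : A ⊆ staysAbove t (-x)) :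
    P {ω | X ω ∈ A} = ENNReal.ofReal (x / (c * t)) := by
  have hvol : ∀ᵐ ω ∂P,
      volume {u ∈ Ioo 0 t | theta t u (X ω) ∈ A} = ENNReal.ofReal (x / c) := by
    filter_upwards [hmono, hrc, hder, hX0, hXt] with ω hmono hrc hder h0 ht'
    have hlevel := volume_theta_mem (A := A) hc ht.le hmono hrc hder
    rw [ht', h0, zero_sub, neg_neg] at hlevel
    exact hlevel (neg_nonpos.2 hx) hwell habove
  have hmean := lintegral_volume_theta_mem_of_map_eq hX hrc hinv hA hdep
  rw [lintegral_congr_ae hvol, lintegral_const, measure_univ, mul_one] at hmean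
  rw [← div_div, ENNReal.ofReal_div_of_pos ht]
  refine (ENNReal.eq_div_iff (by simpa using ht) ENNReal.ofReal_ne_top).2 ?_
  rw [mul_comm, hmean]

theorem measure_forall_ne_of_map_theta_eq (ht : 0 < t) (hx : 0 ≤ x) (hc : 0 < c)
    (hX : Measurable X)
    (hmono : ∀ᵐ ω ∂P, MonotoneOn (fun s => X ω s + c * s) (Icc 0 t))
    (hrc : ∀ᵐ ω ∂P, ∀ s ∈ Ico 0 t, ContinuousWithinAt (X ω) (Ici s) s)
    (hder : ∀ᵐ ω ∂P, ∀ᵐ s, s ∈ Ioo 0 t → HasDerivAt (X ω) (-c) s)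
    (hX0 : ∀ᵐ ω ∂P, X ω 0 = 0) (hXt : ∀ᵐ ω ∂P, X ω t = -x)
    (hinv : ∀ u ∈ Ioo 0 t, P.map (fun ω => theta t u (X ω)) = P.map X) :
    P {ω | ∀ s ∈ Ico 0 t, X ω s ≠ -x} = ENNReal.ofReal (x / (c * t)) := by
  have hprob := fun A =>
    measure_mem_of_map_theta_eq (A := A) ht hx hc hX hmono hrc hder hX0 hXt hinv
  have hsub := staysWellAbove_subset_staysAbove t (-x)
  refine le_antisymm ?_ ?_
  · rw [← hprob _ (measurableSet_staysAbove t _)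
      ((dependsOn_mem_staysAbove t _).mono Ico_subset_Icc_self) hsub le_rfl]
    refine measure_mono_ae ?_
    filter_upwards [hmono, hrc, hX0] with ω hmono hrc h0 hne
    exact mem_staysAbove_of_forall_ne hc.le hmono hrc (by linarith) hne
  · rw [← hprob _ (measurableSet_staysWellAbove t _)
      ((dependsOn_mem_staysWellAbove t _).mono Ico_subset_Icc_self) le_rfl hsub]
    refine measure_mono_ae ?_
    filter_upwards [hrc] with ω hrc hω s hs
    exact (lt_of_mem_staysWellAbove hrc hω hs).ne'

end BallotProbability

theorem ballot_pure_jump_general {Ω : Type*} [MeasurableSpace Ω] (P : Measure Ω)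
    [IsProbabilityMeasure P] (t x c : ℝ) (ht : 0 < t) (hx : 0 ≤ x) (hc : 0 < c)
    (Y : Ω → ℝ → ℝ) (hmeas : Measurable Y)
    (hmono : ∀ᵐ ω ∂P, MonotoneOn (Y ω) (Icc 0 t))
    (hcadlag : ∀ᵐ ω ∂P, ∀ s ∈ Ico 0 t, ContinuousWithinAt (Y ω) (Ici s) s)
    (hsing : ∀ᵐ ω ∂P, ∀ᵐ s, s ∈ Ioo 0 t → HasDerivAt (Y ω) 0 s)
    (hY0 : ∀ᵐ ω ∂P, Y ω 0 = 0)
    (hCEI : ∀ u ∈ Icc 0 t,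
      P.map (fun ω => theta t u (fun s => Y ω s - c * s)) =
        P.map (fun ω s => Y ω s - c * s))
    (hT : ∀ᵐ ω ∂P, Y ω t - c * t = -x) :
    (P {ω | ∀ s ∈ Ico 0 t, Y ω s - c * s ≠ -x}).toReal = x / (c * t) := by
  have hX0 : ∀ᵐ ω ∂P, Y ω 0 - c * 0 = 0 := by simpa using hY0
  have hX_mono : ∀ᵐ ω ∂P, MonotoneOn (fun s => Y ω s - c * s + c * s) (Icc 0 t) := by
    simpa using hmono
  have hX_rc : ∀ᵐ ω ∂P, ∀ s ∈ Ico 0 t, ContinuousWithinAt (fun s => Y ω s - c * s) (Ici s) s := by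
    filter_upwards [hcadlag] with ω h s hs using (h s hs).sub (by fun_prop)
  have hX_der : ∀ᵐ ω ∂P, ∀ᵐ s, s ∈ Ioo 0 t → HasDerivAt (fun s => Y ω s - c * s) (-c) s := by
    filter_upwards [hsing] with ω h
    filter_upwards [h] with s hs hst
    simpa using (hs hst).fun_sub ((hasDerivAt_id' s).const_mul c)
  rw [measure_forall_ne_of_map_theta_eq ht hx hc (by fun_prop) hX_mono hX_rc hX_der hX0 hT
    fun u hu => hCEI u (Ioo_subset_Icc_self hu), ENNReal.toReal_ofReal (by positivity)]

/-- Ballot theorem for `X_s = Y_s − c s` with `Y` a pure-jump non-decreasing cyclically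
interchangeable process, `Y 0 = 0`, `c > 0`, `X t = −x` a.s.: `P(T_x = t) = x/(ct)`. -/
theorem ballot_pure_jump {Ω : Type*} [MeasurableSpace Ω] (P : Measure Ω)
    [IsProbabilityMeasure P] (t x c : ℝ) (ht : 0 < t) (hx : 0 < x) (hc : 0 < c)
    (Y : Ω → ℝ → ℝ) (hmeas : Measurable Y)
    (hmono : ∀ᵐ ω ∂P, MonotoneOn (Y ω) (Icc 0 t))
    (hcadlag : ∀ᵐ ω ∂P, ∀ s ∈ Ico (0:ℝ) t, ContinuousWithinAt (Y ω) (Ici s) s)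
    (hpj : ∀ᵐ ω ∂P, PureJumpOn (Y ω) t)
    (hY0 : ∀ᵐ ω ∂P, Y ω 0 = 0)
    (hCEI : ∀ u ∈ Icc (0:ℝ) t,
      Measure.map (fun ω => theta t u (fun s => Y ω s - c * s)) P =
        Measure.map (fun ω => fun s => Y ω s - c * s) P)
    (hT : ∀ᵐ ω ∂P, Y ω t - c * t = -x) :
    (P {ω | ∀ s ∈ Ico (0:ℝ) t, Y ω s - c * s ≠ -x}).toReal = x / (c * t) := by
  refine ballot_pure_jump_general P t x c ht hx.le hc Y hmeas hmono hcadlag ?_ hY0 hCEI hT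
  filter_upwards [hpj, hmono, hcadlag] with ω h₁ h₂ h₃ using h₁.ae_hasDerivAt_zero ht h₂ h₃
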